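/- arXiv:1608.06178 — 7 statements merged into one kernel-verified Lean document; each statement's English description precedes it below -/
import Mathlib

section
/- If c > 0 and 0 < d < 1, then the equation x = ((1 + c·d·x)/(d + c·x))³ has exactly one solution x with x ≥ 0. -/
theorem g_anti (c d : ℝ) (hc : 0 < c) (hd0 : 0 < d) (hd1 : d < 1) (x y : ℝ) (hx : 0 ≤ x)
    (hxy : x ≤ y) :
    ((1 + c * d * y) / (d + c * y)) ^ 3 ≤ ((1 + c * d * x) / (d + c * x)) ^ 3 := by
  have hy : 0 ≤ y := hx.trans hxy
  have h1 : 0 < d + c * x := by positivity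
  have h2 : 0 < d + c * y := by positivity
  apply pow_le_pow_left₀ (by positivity)
  rw [div_le_div_iff₀ h2 h1]
  have h3 : 0 ≤ c * (y - x) * (1 - d ^ 2) :=
    mul_nonneg (mul_nonneg hc.le (by linarith)) (by nlinarith)
  nlinarith

/-- If `c > 0` and `0 < d < 1`, then the equation `x = ((1 + c*d*x)/(d + c*x))^3`
has exactly one solution `x` with `x ≥ 0`. -/
theorem fixedPoint_unique (c d : ℝ) (hc : 0 < c) (hd0 : 0 < d) (hd1 : d < 1) :
    ∃! x : ℝ, 0 ≤ x ∧ x = ((1 + c * d * x) / (d + c * x)) ^ 3 := by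
  have hanti := g_anti c d hc hd0 hd1
  set g : ℝ → ℝ := fun x => ((1 + c * d * x) / (d + c * x)) ^ 3 with hg
  change ∀ x y : ℝ, 0 ≤ x → x ≤ y → g y ≤ g x at hanti
  change ∃! x : ℝ, 0 ≤ x ∧ x = g x
  have h0 : 0 ≤ g 0 := by simp only [hg]; positivity
  have hcont : ContinuousOn (fun x => x - g x) (Set.Icc 0 (g 0)) := by
    apply continuousOn_id.sub
    apply ContinuousOn.pow
    apply ContinuousOn.div (by fun_prop) (by fun_prop)
    intro x hx
    have := hx.1
    positivity
  obtain ⟨x, hx, hxe⟩ := intermediate_value_Icc h0 hcont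
    (show (0 : ℝ) ∈ Set.Icc (0 - g 0) (g 0 - g (g 0)) from
      ⟨by linarith, by linarith [hanti 0 (g 0) le_rfl h0]⟩)
  have hxe : x - g x = 0 := hxe
  refine ⟨x, ⟨hx.1, by linarith⟩, ?_⟩
  rintro y ⟨hy, hye⟩
  rcases le_total x y with h | h
  · linarith [hanti x y hx.1 h]
  · linarith [hanti y x hy h]
end

section
/- If c > 0 and d > √2, then g''(x) > 0 for all x in the open interval (0, (d² − 2)/(c·d)) and g''(x) < 0 for all x in ((d² − 2)/(c·d), ∞); that is, the graph of g is concave up on (0, (d² − 2)/(c·d)) and concave down on ((d² − 2)/(c·d), ∞). -/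
lemma g_deriv2 (c d x : ℝ) (hx : 0 < d + c * x) :
    deriv (deriv (fun y : ℝ => ((1 + c * d * y) / (d + c * y)) ^ 3)) x =
      6 * c ^ 2 * (d ^ 2 - 1) * (1 + c * d * x) * (d ^ 2 - 2 - c * d * x) / (d + c * x) ^ 5 := by
  have hN : ∀ y : ℝ, HasDerivAt (fun y : ℝ => 1 + c * d * y) (c * d) y := fun y => by
    simpa using ((hasDerivAt_id y).const_mul (c * d)).const_add 1
  have hD : ∀ y : ℝ, HasDerivAt (fun y : ℝ => d + c * y) c y := fun y => by
    simpa using ((hasDerivAt_id y).const_mul c).const_add d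
  have h1 : ∀ y : ℝ, 0 < d + c * y →
      deriv (fun y : ℝ => ((1 + c * d * y) / (d + c * y)) ^ 3) y =
        3 * c * (d ^ 2 - 1) * (1 + c * d * y) ^ 2 / (d + c * y) ^ 4 := fun y hy => by
    have h := (((hN y).fun_div (hD y) hy.ne').fun_pow 3).deriv
    rw [h]
    have := hy.ne'
    push_cast
    field_simp
    ring
  have hev : deriv (fun y : ℝ => ((1 + c * d * y) / (d + c * y)) ^ 3) =ᶠ[nhds x]
      fun y => 3 * c * (d ^ 2 - 1) * (1 + c * d * y) ^ 2 / (d + c * y) ^ 4 := by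
    have ho := (hD x).continuousAt.eventually (lt_mem_nhds hx)
    filter_upwards [ho] with y hy using h1 y hy
  rw [hev.deriv_eq]
  have hne := hx.ne'
  have h := ((((hN x).fun_pow 2).const_mul (3 * c * (d ^ 2 - 1))).fun_div
    ((hD x).fun_pow 4) (pow_ne_zero 4 hne)).deriv
  rw [h]
  push_cast
  field_simp
  ring


/-- If `c > 0` and `d > √2`, then the second derivative of
`g x = ((1 + c*d*x)/(d + c*x))^3` is positive on `(0, (d^2 - 2)/(c*d))` and negative on
`((d^2 - 2)/(c*d), ∞)`: the graph of `g` is concave up on the first interval and concave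
down on the second. -/
theorem g_concavity (c d : ℝ) (hc : 0 < c) (hd : Real.sqrt 2 < d) :
    (∀ x ∈ Set.Ioo (0 : ℝ) ((d ^ 2 - 2) / (c * d)),
        0 < deriv (deriv (fun y : ℝ => ((1 + c * d * y) / (d + c * y)) ^ 3)) x) ∧
    (∀ x ∈ Set.Ioi ((d ^ 2 - 2) / (c * d)),
        deriv (deriv (fun y : ℝ => ((1 + c * d * y) / (d + c * y)) ^ 3)) x < 0) := by

  have hd0 : 0 < d := lt_of_le_of_lt (Real.sqrt_nonneg 2) hd
  have hd2 : 2 < d ^ 2 := (Real.sqrt_lt' hd0).1 hd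
  have hcd : 0 < c * d := mul_pos hc hd0
  have hd1 : 0 < d ^ 2 - 1 := by linarith
  constructor
  · rintro x ⟨hx0, hx⟩
    rw [lt_div_iff₀ hcd] at hx
    have hD : 0 < d + c * x := by positivity
    rw [g_deriv2 c d x hD]
    have h3 : 0 < d ^ 2 - 2 - c * d * x := by linarith
    positivity
  · intro x hx
    have hx0 : 0 < x := lt_of_le_of_lt (div_nonneg (by linarith) hcd.le) hx
    rw [Set.mem_Ioi, div_lt_iff₀ hcd] at hx
    have hD : 0 < d + c * x := by positivity
    rw [g_deriv2 c d x hD]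
    have h3 : d ^ 2 - 2 - c * d * x < 0 := by linarith
    exact div_neg_of_neg_of_pos (mul_neg_of_pos_of_neg (by positivity) h3) (by positivity)
end

section
/- For all real parameters c > 0 and d > 0, the equation g(x) = x has at most 3 solutions with x ≥ 0, where g(x) = ((1 + c·d·x)/(d + c·x))³. -/
/-- For all real parameters `c > 0` and `d > 0`, the equation `g x = x` has at most 3
solutions with `x ≥ 0`, where `g x = ((1 + c*d*x)/(d + c*x))^3`. -/
theorem fixedPoints_atMost_three (c d : ℝ) (hc : 0 < c) (hd : 0 < d) :
    ∃ S : Finset ℝ, S.card ≤ 3 ∧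
      ∀ x : ℝ, 0 ≤ x → ((1 + c * d * x) / (d + c * x)) ^ 3 = x → x ∈ S := by
  classical
  let P : Polynomial ℝ := Polynomial.C c * Polynomial.X ^ 4 - Polynomial.C (c * d) * Polynomial.X ^ 3
    + Polynomial.C d * Polynomial.X - 1
  have hev : ∀ y : ℝ, P.eval y = c * y ^ 4 - c * d * y ^ 3 + d * y - 1 := by
    intro y; simp [P]
  have hP : P ≠ 0 := by
    intro h
    have h0 := hev 0
    rw [h] at h0
    norm_num at h0
  have hdeg : P.natDegree ≤ 4 := by
    simp only [P]; compute_degree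
  have hroots : P.roots.toFinset.card ≤ 4 :=
    (Multiset.toFinset_card_le _).trans ((Polynomial.card_roots' P).trans hdeg)
  have hneg : ∃ z : ℝ, z < 0 ∧ P.eval z = 0 := by
    obtain ⟨M, hM1, hM2⟩ : ∃ M : ℝ, 1 ≤ M ∧ 1 ≤ c * M := by
      refine ⟨1 + 1 / c, ?_, ?_⟩
      · have : 0 < 1 / c := by positivity
        linarith
      · have : c * (1 + 1 / c) = c + 1 := by field_simp
        linarith
    have hM : 0 ≤ P.eval (-M) := by
      rw [hev]
      have e2 : 1 ≤ c * M * M := by nlinarith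
      have e4 : 1 ≤ (c * M * M) * (M * M) := by nlinarith
      have e3 : 0 ≤ d * M * (c * M * M - 1) :=
        mul_nonneg (by positivity) (by linarith)
      nlinarith
    have h0 : P.eval 0 ≤ 0 := by rw [hev]; norm_num
    obtain ⟨z, hz, hz0⟩ := intermediate_value_Icc' (f := fun y => P.eval y)
      (by linarith : -M ≤ 0) P.continuous.continuousOn ⟨h0, hM⟩
    refine ⟨z, lt_of_le_of_ne hz.2 ?_, hz0⟩
    rintro rfl
    simp only [hev] at hz0
    norm_num at hz0
  obtain ⟨z, hz, hz0⟩ := hneg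
  have hzmem : z ∈ P.roots.toFinset := by
    rw [Multiset.mem_toFinset, Polynomial.mem_roots hP]; exact hz0
  refine ⟨(P.roots.toFinset.erase z).image (fun y => y ^ 3), ?_, ?_⟩
  · refine Finset.card_image_le.trans ?_
    rw [Finset.card_erase_of_mem hzmem]
    omega
  · intro x hx h
    have hden : 0 < d + c * x := by positivity
    have hy0 : 0 ≤ (1 + c * d * x) / (d + c * x) := by positivity
    rw [Finset.mem_image]
    refine ⟨(1 + c * d * x) / (d + c * x), ?_, h⟩
    have hy : (1 + c * d * x) / (d + c * x) * (d + c * x) = 1 + c * d * x :=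
      div_mul_cancel₀ _ hden.ne'
    generalize (1 + c * d * x) / (d + c * x) = y at *
    subst h
    rw [Finset.mem_erase, Multiset.mem_toFinset, Polynomial.mem_roots hP]
    refine ⟨by linarith [hz.trans_le hy0] |> fun (h : z < y) => h.ne', ?_⟩
    change P.eval y = 0
    rw [hev]
    linarith
end

section
/- For all c > 0 and d > 2, one has 0 < η₁(c,d) < η₂(c,d), where η₁(c,d) = −c·d⁴·(1 − d² + √(4 − 5d² + d⁴))³ / ((2 − 2d² + √(4 − 5d² + d⁴))³ · (2 − d² + √(4 − 5d² + d⁴))) and η₂(c,d) = c·d⁴·(−1 + d² + √(4 − 5d² + d⁴))³ / ((−2 + d² + √(4 − 5d² + d⁴)) · (−2 + 2d² + √(4 − 5d² + d⁴))³). -/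
/-- For all `c > 0` and `d > 2`, one has `0 < η₁(c,d) < η₂(c,d)`, where `η₁, η₂` are the
two critical tangency slopes of the line `y = m*x` with the curve
`y = ((1 + c*d*x)/(d + c*x))^3`. -/
theorem eta_pos_lt (c d : ℝ) (hc : 0 < c) (hd : 2 < d) :
    0 < -(c * d ^ 4 * (1 - d ^ 2 + Real.sqrt (4 - 5 * d ^ 2 + d ^ 4)) ^ 3)
          / ((2 - 2 * d ^ 2 + Real.sqrt (4 - 5 * d ^ 2 + d ^ 4)) ^ 3
              * (2 - d ^ 2 + Real.sqrt (4 - 5 * d ^ 2 + d ^ 4))) ∧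
    -(c * d ^ 4 * (1 - d ^ 2 + Real.sqrt (4 - 5 * d ^ 2 + d ^ 4)) ^ 3)
          / ((2 - 2 * d ^ 2 + Real.sqrt (4 - 5 * d ^ 2 + d ^ 4)) ^ 3
              * (2 - d ^ 2 + Real.sqrt (4 - 5 * d ^ 2 + d ^ 4)))
      < c * d ^ 4 * (-1 + d ^ 2 + Real.sqrt (4 - 5 * d ^ 2 + d ^ 4)) ^ 3
          / ((-2 + d ^ 2 + Real.sqrt (4 - 5 * d ^ 2 + d ^ 4))
              * (-2 + 2 * d ^ 2 + Real.sqrt (4 - 5 * d ^ 2 + d ^ 4)) ^ 3) := by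
  have hP : 4 - 5 * d ^ 2 + d ^ 4 = (d ^ 2 - 1) * (d ^ 2 - 4) := by ring
  have hd2 : 4 < d ^ 2 := by nlinarith
  have hpos : 0 < 4 - 5 * d ^ 2 + d ^ 4 := by
    rw [hP]; exact mul_pos (by linarith) (by linarith)
  have hs : 0 < Real.sqrt (4 - 5 * d ^ 2 + d ^ 4) := Real.sqrt_pos.mpr hpos
  have hsq : Real.sqrt (4 - 5 * d ^ 2 + d ^ 4) ^ 2 = 4 - 5 * d ^ 2 + d ^ 4 :=
    Real.sq_sqrt hpos.le
  generalize Real.sqrt (4 - 5 * d ^ 2 + d ^ 4) = s at hs hsq ⊢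
  rw [hP] at hsq
  have hk : 0 < c * d ^ 4 := by positivity
  generalize c * d ^ 4 = k at hk ⊢
  obtain ⟨a, ha⟩ : ∃ a, a = d ^ 2 - 1 := ⟨_, rfl⟩
  have hda : d ^ 2 = a + 1 := by linarith
  rw [hda] at hsq hd2 ⊢
  have hsq' : s ^ 2 = a * (a - 3) := by rw [hsq]; ring
  have hsa : s < a - 1 := by nlinarith
  have hA : 0 < a - s := by linarith
  have hB : 0 < 2 * a - s := by linarith
  have hC : 0 < a - 1 - s := by linarith
  have e1 : -(k * (1 - (a + 1) + s) ^ 3) / ((2 - 2 * (a + 1) + s) ^ 3 * (2 - (a + 1) + s))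
      = k * (a - s) ^ 3 / ((a - 1 - s) * (2 * a - s) ^ 3) := by
    congr 1 <;> ring
  have e2 : k * (-1 + (a + 1) + s) ^ 3 / ((-2 + (a + 1) + s) * (-2 + 2 * (a + 1) + s) ^ 3)
      = k * (a + s) ^ 3 / ((a - 1 + s) * (2 * a + s) ^ 3) := by
    congr 1 <;> ring
  rw [e1, e2]
  have hD : 0 < a - 1 + s := by linarith
  have hE : 0 < 2 * a + s := by linarith
  refine ⟨by positivity, ?_⟩
  rw [div_lt_div_iff₀ (by positivity) (by positivity)]
  have f1 : (a - s) * (2 * a + s) = a * (a + 3 - s) := by linear_combination -hsq'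
  have f2 : (a + s) * (2 * a - s) = a * (a + 3 + s) := by linear_combination -hsq'
  have g1 : k * (a - s) ^ 3 * ((a - 1 + s) * (2 * a + s) ^ 3)
      = k * (a * (a + 3 - s)) ^ 3 * (a - 1 + s) := by rw [← f1]; ring
  have g2 : k * (a + s) ^ 3 * ((a - 1 - s) * (2 * a - s) ^ 3)
      = k * (a * (a + 3 + s)) ^ 3 * (a - 1 - s) := by rw [← f2]; ring
  rw [g1, g2]
  have key : (a + 3 + s) ^ 3 * (a - 1 - s) - (a + 3 - s) ^ 3 * (a - 1 + s)
      = 4 * s * ((a + 9) * (a - 3)) := by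
    linear_combination (2 * s * (-2 * a - 10)) * hsq'
  have h1 : 0 < 4 * s * ((a + 9) * (a - 3)) :=
    mul_pos (by linarith) (mul_pos (by linarith) (by linarith))
  have ha0 : 0 < a := by linarith
  have h2 : 0 < k * a ^ 3 * (4 * s * ((a + 9) * (a - 3))) := mul_pos (by positivity) h1
  rw [← key] at h2
  linarith
end

section
/- Let c > 0, d > 2 and m > 0, and set g(x) = ((1 + c·d·x)/(d + c·x))³. If η₁(c,d) < m < η₂(c,d), then the equation g(x) = m·x has exactly 3 solutions with x > 0; if m = η₁(c,d) or m = η₂(c,d), then the equation g(x) = m·x has exactly 2 solutions with x > 0. -/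
/-- The first critical tangency slope `η₁(c,d)`. -/
noncomputable def eta₁ (c d : ℝ) : ℝ :=
  -(c * d ^ 4 * (1 - d ^ 2 + Real.sqrt (4 - 5 * d ^ 2 + d ^ 4)) ^ 3)
    / ((2 - 2 * d ^ 2 + Real.sqrt (4 - 5 * d ^ 2 + d ^ 4)) ^ 3
        * (2 - d ^ 2 + Real.sqrt (4 - 5 * d ^ 2 + d ^ 4)))

/-- The second critical tangency slope `η₂(c,d)`. -/
noncomputable def eta₂ (c d : ℝ) : ℝ :=
  c * d ^ 4 * (-1 + d ^ 2 + Real.sqrt (4 - 5 * d ^ 2 + d ^ 4)) ^ 3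
    / ((-2 + d ^ 2 + Real.sqrt (4 - 5 * d ^ 2 + d ^ 4))
        * (-2 + 2 * d ^ 2 + Real.sqrt (4 - 5 * d ^ 2 + d ^ 4)) ^ 3)

open Set

noncomputable def hfun (d y : ℝ) : ℝ := (1 + d * y) ^ 3 / (y * (d + y) ^ 3)

/-- Abstract counting for a decreasing-increasing-decreasing function. -/
lemma count_abs (h : ℝ → ℝ) (a b k : ℝ) (ha : 0 < a) (hab : a < b)
    (hcont : ContinuousOn h (Ioi 0))
    (h1 : StrictAntiOn h (Ioc 0 a)) (h2 : StrictMonoOn h (Icc a b))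
    (h3 : StrictAntiOn h (Ici b))
    (hs : ∃ y, 0 < y ∧ y < a ∧ k < h y) (hl : ∃ y, b < y ∧ h y < k) :
    (h a < k ∧ k < h b → {y : ℝ | 0 < y ∧ h y = k}.ncard = 3) ∧
    (k = h a ∨ k = h b → {y : ℝ | 0 < y ∧ h y = k}.ncard = 2) := by
  obtain ⟨s, hs0, hsa, hsk⟩ := hs
  obtain ⟨l, hbl, hlk⟩ := hl
  have hhab : h a < h b := h2 ⟨le_rfl, hab.le⟩ ⟨hab.le, le_rfl⟩ hab
  have E1 : h a < k → ∃ y, 0 < y ∧ y < a ∧ h y = k := by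
    intro hk
    obtain ⟨y, hy, hyk⟩ := intermediate_value_Ioo' hsa.le
      (hcont.mono (fun z hz => lt_of_lt_of_le hs0 hz.1)) ⟨hk, hsk⟩
    exact ⟨y, hs0.trans hy.1, hy.2, hyk⟩
  have E2 : h a < k → k < h b → ∃ y, a < y ∧ y < b ∧ h y = k := by
    intro hk hk'
    obtain ⟨y, hy, hyk⟩ := intermediate_value_Ioo hab.le
      (hcont.mono (fun z hz => lt_of_lt_of_le ha hz.1)) ⟨hk, hk'⟩
    exact ⟨y, hy.1, hy.2, hyk⟩
  have E3 : k < h b → ∃ y, b < y ∧ h y = k := by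
    intro hk
    obtain ⟨y, hy, hyk⟩ := intermediate_value_Ioo' hbl.le
      (hcont.mono (fun z hz => lt_of_lt_of_le (ha.trans hab) hz.1)) ⟨hlk, hk⟩
    exact ⟨y, hy.1, hyk⟩
  have U1 : ∀ u v, 0 < u → u ≤ a → 0 < v → v ≤ a → h u = h v → u = v :=
    fun u v p q r t e => h1.injOn ⟨p, q⟩ ⟨r, t⟩ e
  have U2 : ∀ u v, a ≤ u → u ≤ b → a ≤ v → v ≤ b → h u = h v → u = v :=
    fun u v p q r t e => h2.injOn ⟨p, q⟩ ⟨r, t⟩ e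
  have U3 : ∀ u v, b ≤ u → b ≤ v → h u = h v → u = v :=
    fun u v p q e => h3.injOn p q e
  have hb0 := ha.trans hab
  refine ⟨?_, ?_⟩
  · rintro ⟨hk, hk'⟩
    obtain ⟨u, hu0, hua, hu⟩ := E1 hk
    obtain ⟨v, hva, hvb, hv⟩ := E2 hk hk'
    obtain ⟨w, hwb, hw⟩ := E3 hk'
    rw [Set.ncard_eq_three]
    refine ⟨u, v, w, (hua.trans hva).ne,
      (hua.trans (hab.trans hwb)).ne, (hvb.trans hwb).ne, ?_⟩
    ext y
    simp only [mem_ofPred_eq, mem_insert_iff, mem_singleton_iff]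
    constructor
    · rintro ⟨hy, hyk⟩
      rcases le_total y a with h' | h'
      · exact Or.inl (U1 _ _ hy h' hu0 hua.le (hyk.trans hu.symm))
      rcases le_total y b with h'' | h''
      · exact Or.inr (Or.inl (U2 _ _ h' h'' hva.le hvb.le (hyk.trans hv.symm)))
      · exact Or.inr (Or.inr (U3 _ _ h'' hwb.le (hyk.trans hw.symm)))
    · rintro (rfl | rfl | rfl)
      · exact ⟨hu0, hu⟩
      · exact ⟨ha.trans hva, hv⟩
      · exact ⟨hb0.trans hwb, hw⟩
  · rintro (hk | hk)
    · obtain ⟨w, hwb, hw⟩ := E3 (hk ▸ hhab)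
      rw [Set.ncard_eq_two]
      refine ⟨a, w, (hab.trans hwb).ne, ?_⟩
      ext y
      simp only [mem_ofPred_eq, mem_insert_iff, mem_singleton_iff]
      constructor
      · rintro ⟨hy, hyk⟩
        rcases le_total y a with h' | h'
        · exact Or.inl (U1 _ _ hy h' ha le_rfl (hyk.trans hk))
        rcases le_total y b with h'' | h''
        · exact Or.inl (U2 _ _ h' h'' le_rfl hab.le (hyk.trans hk))
        · exact Or.inr (U3 _ _ h'' hwb.le (hyk.trans hw.symm))
      · rintro (rfl | rfl)
        · exact ⟨ha, hk.symm⟩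
        · exact ⟨hb0.trans hwb, hw⟩
    · obtain ⟨u, hu0, hua, hu⟩ := E1 (hk ▸ hhab)
      rw [Set.ncard_eq_two]
      refine ⟨u, b, (hua.trans hab).ne, ?_⟩
      ext y
      simp only [mem_ofPred_eq, mem_insert_iff, mem_singleton_iff]
      constructor
      · rintro ⟨hy, hyk⟩
        rcases le_total y a with h' | h'
        · exact Or.inl (U1 _ _ hy h' hu0 hua.le (hyk.trans hu.symm))
        rcases le_total y b with h'' | h''
        · exact Or.inr (U2 _ _ h' h'' hab.le le_rfl (hyk.trans hk))
        · exact Or.inr (U3 _ _ h'' le_rfl (hyk.trans hk))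
      · rintro (rfl | rfl)
        · exact ⟨hu0, hu⟩
        · exact ⟨hb0, hk.symm⟩

lemma hfun_deriv (d y : ℝ) (hd : 2 < d) (hy : 0 < y) :
    HasDerivAt (hfun d)
      (-((1 + d * y) ^ 2 * (d * y ^ 2 - 2 * (d ^ 2 - 2) * y + d)) / (y ^ 2 * (d + y) ^ 4)) y := by
  have hne : y * (d + y) ^ 3 ≠ 0 := by positivity
  have hdy : d + y ≠ 0 := by positivity
  have e1 : HasDerivAt (fun y : ℝ => (1 + d * y) ^ 3) (3 * (1 + d * y) ^ 2 * d) y := by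
    have := (((hasDerivAt_id y).const_mul d).const_add 1).pow 3
    refine HasDerivAt.congr_deriv (f := fun y : ℝ => (1 + d * y) ^ 3) this ?_
    simp
  have e2 : HasDerivAt (fun y : ℝ => y * (d + y) ^ 3)
      (1 * (d + y) ^ 3 + y * (3 * (d + y) ^ 2)) y := by
    have := (hasDerivAt_id y).mul (((hasDerivAt_id y).const_add d).pow 3)
    refine HasDerivAt.congr_deriv (f := fun y : ℝ => y * (d + y) ^ 3) this ?_
    simp
  have := e1.div e2 hne
  refine this.congr_deriv ?_
  field_simp
  ring

lemma count_h (d a b k : ℝ) (hd : 2 < d) (ha : 0 < a) (hab : a < b) (ha1 : a ≤ 1) (hk : 0 < k)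
    (hq : ∀ y, d * y ^ 2 - 2 * (d ^ 2 - 2) * y + d = d * ((y - a) * (y - b))) :
    (hfun d a < k ∧ k < hfun d b → {y : ℝ | 0 < y ∧ hfun d y = k}.ncard = 3) ∧
    (k = hfun d a ∨ k = hfun d b → {y : ℝ | 0 < y ∧ hfun d y = k}.ncard = 2) := by
  have hcont : ContinuousOn (hfun d) (Ioi 0) := fun y hy =>
    (hfun_deriv d y hd hy).continuousAt.continuousWithinAt
  have hb : 0 < b := ha.trans hab
  have hder : ∀ y, 0 < y → deriv (hfun d) y =
      ((1 + d * y) ^ 2 * d / (y ^ 2 * (d + y) ^ 4)) * ((y - a) * (b - y)) := by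
    intro y hy
    rw [(hfun_deriv d y hd hy).deriv, hq]
    ring
  have hpos : ∀ y, 0 < y → 0 < (1 + d * y) ^ 2 * d / (y ^ 2 * (d + y) ^ 4) := by
    intro y hy
    positivity
  apply count_abs _ a b k ha hab hcont
  · apply strictAntiOn_of_deriv_neg (convex_Ioc 0 a) (hcont.mono fun z hz => hz.1)
    intro y hy
    rw [interior_Ioc] at hy
    rw [hder y hy.1]
    exact mul_neg_of_pos_of_neg (hpos y hy.1)
      (mul_neg_of_neg_of_pos (by linarith [hy.2]) (by linarith [hy.2]))
  · apply strictMonoOn_of_deriv_pos (convex_Icc a b)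
      (hcont.mono fun z hz => lt_of_lt_of_le ha hz.1)
    intro y hy
    rw [interior_Icc] at hy
    have : 0 < y := ha.trans hy.1
    rw [hder y this]
    exact mul_pos (hpos y this) (mul_pos (by linarith [hy.1]) (by linarith [hy.2]))
  · apply strictAntiOn_of_deriv_neg (convex_Ici b)
      (hcont.mono fun z hz => lt_of_lt_of_le hb hz)
    intro y hy
    rw [interior_Ici] at hy
    have hy' : b < y := hy
    have : 0 < y := hb.trans hy
    rw [hder y this]
    exact mul_neg_of_pos_of_neg (hpos y this)
      (mul_neg_of_pos_of_neg (by linarith) (by linarith))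
  · have hp : 0 < 1 / (k * (d + 1) ^ 3) := by positivity
    refine ⟨min a (1 / (k * (d + 1) ^ 3)) / 2, by positivity, ?_, ?_⟩
    · linarith [min_le_left a (1 / (k * (d + 1) ^ 3))]
    · set y := min a (1 / (k * (d + 1) ^ 3)) / 2 with hy
      have hy0 : 0 < y := by positivity
      have hya : y ≤ 1 := by linarith [min_le_left a (1 / (k * (d + 1) ^ 3))]
      have hyk : y < 1 / (k * (d + 1) ^ 3) := by
        linarith [min_le_right a (1 / (k * (d + 1) ^ 3))]
      rw [lt_div_iff₀ (by positivity)] at hyk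
      unfold hfun
      rw [lt_div_iff₀ (by positivity)]
      have h1 : (d + y) ^ 3 ≤ (d + 1) ^ 3 := by gcongr
      have h2 : 1 ≤ (1 + d * y) ^ 3 := one_le_pow₀ (by nlinarith)
      have h3 : k * y * (d + y) ^ 3 ≤ k * y * (d + 1) ^ 3 := by gcongr
      nlinarith
  · refine ⟨b + d ^ 3 / k, by linarith [show 0 < d ^ 3 / k by positivity], ?_⟩
    have hyk : d ^ 3 / k < b + d ^ 3 / k := by linarith
    have hy0 : 0 < b + d ^ 3 / k := by positivity
    generalize b + d ^ 3 / k = y at *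
    rw [div_lt_iff₀ hk] at hyk
    unfold hfun
    rw [div_lt_iff₀ (by positivity)]
    have h1 : (1 + d * y) ^ 3 ≤ (d * (d + y)) ^ 3 := by
      gcongr
      nlinarith
    have h3 : d ^ 3 * (d + y) ^ 3 < y * k * (d + y) ^ 3 := by gcongr
    rw [mul_pow] at h1
    nlinarith

/-- Main Proposition: for `c > 0`, `d > 2` and `m > 0`, with
`g x = ((1 + c*d*x)/(d + c*x))^3`: if `η₁(c,d) < m < η₂(c,d)` the equation `g x = m*x`
has exactly 3 positive solutions, and if `m = η₁(c,d)` or `m = η₂(c,d)` it has exactly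
2 positive solutions. -/
theorem solutions_count (c d m : ℝ) (hc : 0 < c) (hd : 2 < d) (hm : 0 < m) :
    (eta₁ c d < m ∧ m < eta₂ c d →
      {x : ℝ | 0 < x ∧ ((1 + c * d * x) / (d + c * x)) ^ 3 = m * x}.ncard = 3) ∧
    (m = eta₁ c d ∨ m = eta₂ c d →
      {x : ℝ | 0 < x ∧ ((1 + c * d * x) / (d + c * x)) ^ 3 = m * x}.ncard = 2) := by
  have hd2 : 4 < d ^ 2 := by nlinarith
  have hS : 0 < 4 - 5 * d ^ 2 + d ^ 4 := by nlinarith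
  have hset : {x : ℝ | 0 < x ∧ ((1 + c * d * x) / (d + c * x)) ^ 3 = m * x} =
      (fun y => y / c) '' {y : ℝ | 0 < y ∧ hfun d y = m / c} := by
    have key : ∀ x, 0 < x →
        (((1 + c * d * x) / (d + c * x)) ^ 3 = m * x ↔ hfun d (c * x) = m / c) := by
      intro x hx
      unfold hfun
      have : 0 < d + c * x := by positivity
      rw [div_pow, div_eq_iff (by positivity), div_eq_div_iff (by positivity) (by positivity)]
      constructor
      · intro h
        linear_combination c * h
      · intro h
        apply mul_left_cancel₀ hc.ne'
        linear_combination h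
    ext x
    simp only [mem_ofPred_eq, mem_image]
    constructor
    · rintro ⟨hx, h⟩
      exact ⟨c * x, ⟨by positivity, (key x hx).1 h⟩, by field_simp⟩
    · rintro ⟨y, ⟨hy, h⟩, rfl⟩
      have hx : 0 < y / c := by positivity
      refine ⟨hx, (key _ hx).2 ?_⟩
      rwa [mul_div_cancel₀ _ hc.ne']
  rw [hset, Set.ncard_image_of_injective _ (fun u v h => by
    simpa [hc.ne'] using h)]
  unfold eta₁ eta₂
  set S := Real.sqrt (4 - 5 * d ^ 2 + d ^ 4) with hSdef
  have hSp : 0 < S := Real.sqrt_pos.2 hS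
  have hSS : S ^ 2 = 4 - 5 * d ^ 2 + d ^ 4 := Real.sq_sqrt hS.le
  have hSlt : S < d ^ 2 - 2 := by nlinarith
  have hd0 : d ≠ 0 := by positivity
  have hA : 0 < (d ^ 2 - 2 - S) / d := div_pos (by linarith) (by linarith)
  have hAB : (d ^ 2 - 2 - S) / d < (d ^ 2 - 2 + S) / d := by gcongr; linarith
  have hprod : (d ^ 2 - 2 - S) / d * ((d ^ 2 - 2 + S) / d) = 1 := by
    field_simp
    linear_combination -hSS
  have hA1 : (d ^ 2 - 2 - S) / d ≤ 1 := by nlinarith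
  have hmain := count_h d _ _ (m / c) hd hA hAB hA1 (by positivity) (by
    intro y
    have : d * ((y - (d ^ 2 - 2 - S) / d) * (y - (d ^ 2 - 2 + S) / d)) =
      d * (y ^ 2 - ((d ^ 2 - 2 - S) / d + (d ^ 2 - 2 + S) / d) * y
        + (d ^ 2 - 2 - S) / d * ((d ^ 2 - 2 + S) / d)) := by ring
    rw [this, hprod]
    field_simp
    ring)
  have n1 : d ^ 2 - 2 - S ≠ 0 := by linarith
  have n2 : 2 * d ^ 2 - 2 - S ≠ 0 := by linarith
  have n3 : d ^ 2 - 2 + S ≠ 0 := by linarith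
  have n4 : 2 * d ^ 2 - 2 + S ≠ 0 := by linarith
  have hB1 : -(c * d ^ 4 * (1 - d ^ 2 + S) ^ 3) / ((2 - 2 * d ^ 2 + S) ^ 3 * (2 - d ^ 2 + S))
      = c * hfun d ((d ^ 2 - 2 - S) / d) := by
    have r1 : 1 + d * ((d ^ 2 - 2 - S) / d) = d ^ 2 - 1 - S := by field_simp; ring
    have r2 : d + (d ^ 2 - 2 - S) / d = (2 * d ^ 2 - 2 - S) / d := by field_simp; ring
    have r3 : (1 - d ^ 2 + S) = -(d ^ 2 - 1 - S) := by ring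
    have r4 : 2 - 2 * d ^ 2 + S = -(2 * d ^ 2 - 2 - S) := by ring
    have r5 : 2 - d ^ 2 + S = -(d ^ 2 - 2 - S) := by ring
    unfold hfun
    rw [r1, r2, r3, r4, r5]
    generalize d ^ 2 - 2 - S = p at *
    generalize 2 * d ^ 2 - 2 - S = q at *
    generalize d ^ 2 - 1 - S = r at *
    have : (-q) ^ 3 * -p = q ^ 3 * p := by ring
    rw [this]
    field_simp
  have hB2 : c * d ^ 4 * (-1 + d ^ 2 + S) ^ 3 / ((-2 + d ^ 2 + S) * (-2 + 2 * d ^ 2 + S) ^ 3)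
      = c * hfun d ((d ^ 2 - 2 + S) / d) := by
    have r1 : 1 + d * ((d ^ 2 - 2 + S) / d) = d ^ 2 - 1 + S := by field_simp; ring
    have r2 : d + (d ^ 2 - 2 + S) / d = (2 * d ^ 2 - 2 + S) / d := by field_simp; ring
    have r3 : (-1 + d ^ 2 + S) = (d ^ 2 - 1 + S) := by ring
    have r4 : -2 + 2 * d ^ 2 + S = (2 * d ^ 2 - 2 + S) := by ring
    have r5 : -2 + d ^ 2 + S = (d ^ 2 - 2 + S) := by ring
    unfold hfun
    rw [r1, r2, r3, r4, r5]
    generalize d ^ 2 - 2 + S = p at *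
    generalize 2 * d ^ 2 - 2 + S = q at *
    generalize d ^ 2 - 1 + S = r at *
    field_simp
  rw [hB1, hB2]
  rw [lt_div_iff₀' hc, div_lt_iff₀' hc, div_eq_iff hc.ne', div_eq_iff hc.ne',
    mul_comm _ c, mul_comm _ c] at hmain
  exact hmain
end

section
/- Let a, b, L > 0 and let v₁, v₄, v₅, v₈ be positive reals satisfying v₁ = v₄³ and v₈ = v₅³, together with the fixed-point system: v₁ = L^{1/3}·((1 + (ab)²·v₁·v₄)/(a·b·v₄))³, v₄⁻¹ = L^{1/3}·((b² + a²·v₅·v₈)/(a·b·v₅))³, v₅⁻¹ = L^{1/3}·((b² + a²·v₁·v₄)/(a·b·v₄))³, v₈ = L^{1/3}·((1 + (ab)²·v₅·v₈)/(a·b·v₅))³. Then v₄⁷·v₅⁻³ = ((1 + (ab)²·v₄⁴)/(b² + a²·v₅⁴))³ and v₅⁷·v₄⁻³ = ((1 + (ab)²·v₅⁴)/(b² + a²·v₄⁴))³. -/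
theorem reduced_aux (c k x y P Q : ℝ) (hc : 0 < c) (hk : 0 < k) (hx : 0 < x) (hy : 0 < y)
    (hQ : 0 < Q) (e1 : x ^ 3 = c * (P / (k * x)) ^ 3) (e2 : x⁻¹ = c * (Q / (k * y)) ^ 3) :
    x ^ 7 * (y ^ 3)⁻¹ = (P / Q) ^ 3 := by
  have h1 : x ^ 3 * (k * x) ^ 3 = c * P ^ 3 := by
    rw [div_pow, ← mul_div_assoc, eq_div_iff (by positivity)] at e1
    exact e1
  have h2 : (k * y) ^ 3 = x * (c * Q ^ 3) := by
    rw [div_pow, ← mul_div_assoc, eq_div_iff (by positivity),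
      inv_mul_eq_iff_eq_mul₀ hx.ne'] at e2
    exact e2
  rw [div_pow, ← div_eq_mul_inv, div_eq_div_iff (by positivity) (by positivity)]
  apply mul_left_cancel₀ hc.ne'
  linear_combination y ^ 3 * h1 - x ^ 6 * h2

/-- For positive `a, b, L` and positive `v₁, v₄, v₅, v₈` with `v₁ = v₄³`, `v₈ = v₅³`
satisfying the translation-invariant fixed-point system, one obtains the reduced
equations `v₄⁷·v₅⁻³ = ((1 + (ab)²·v₄⁴)/(b² + a²·v₅⁴))³` and
`v₅⁷·v₄⁻³ = ((1 + (ab)²·v₅⁴)/(b² + a²·v₄⁴))³`. -/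
theorem reduced_equations (a b L v₁ v₄ v₅ v₈ : ℝ)
    (ha : 0 < a) (hb : 0 < b) (hL : 0 < L)
    (hv1 : 0 < v₁) (hv4 : 0 < v₄) (hv5 : 0 < v₅) (hv8 : 0 < v₈)
    (h14 : v₁ = v₄ ^ 3) (h85 : v₈ = v₅ ^ 3)
    (e1 : v₁ = L ^ ((1 : ℝ) / 3) * ((1 + (a * b) ^ 2 * v₁ * v₄) / (a * b * v₄)) ^ 3)
    (e4 : v₄⁻¹ = L ^ ((1 : ℝ) / 3) * ((b ^ 2 + a ^ 2 * v₅ * v₈) / (a * b * v₅)) ^ 3)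
    (e5 : v₅⁻¹ = L ^ ((1 : ℝ) / 3) * ((b ^ 2 + a ^ 2 * v₁ * v₄) / (a * b * v₄)) ^ 3)
    (e8 : v₈ = L ^ ((1 : ℝ) / 3) * ((1 + (a * b) ^ 2 * v₅ * v₈) / (a * b * v₅)) ^ 3) :
    v₄ ^ 7 * (v₅ ^ 3)⁻¹ = ((1 + (a * b) ^ 2 * v₄ ^ 4) / (b ^ 2 + a ^ 2 * v₅ ^ 4)) ^ 3 ∧
    v₅ ^ 7 * (v₄ ^ 3)⁻¹ = ((1 + (a * b) ^ 2 * v₅ ^ 4) / (b ^ 2 + a ^ 2 * v₄ ^ 4)) ^ 3 := by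
  have hc : 0 < L ^ ((1 : ℝ) / 3) := Real.rpow_pos_of_pos hL _
  have hk : 0 < a * b := mul_pos ha hb
  subst h14 h85
  constructor
  · refine reduced_aux _ (a * b) v₄ v₅ _ _ hc hk hv4 hv5 (by positivity) ?_ ?_
    · convert e1 using 5; ring
    · convert e4 using 5; ring
  · refine reduced_aux _ (a * b) v₅ v₄ _ _ hc hk hv5 hv4 (by positivity) ?_ ?_
    · convert e8 using 5; ring
    · convert e5 using 5; ring
end

section
/- Let c = e^{2·(−1.7)/13} and d = e^{2·(6.5)/13} = e (i.e., the parameters corresponding to coupling constants J = −1.7, J_p = 6.5 and temperature T = 13). Then the equation x = ((1 + c·d·x)/(d + c·x))³ has at least three distinct solutions with x > 0. -/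
/-- For the parameters `c = e^(2·(−1.7)/13)` and `d = e^(2·6.5/13)` (corresponding to
coupling constants `J = −1.7`, `J_p = 6.5` and temperature `T = 13`), the equation
`x = ((1 + c·d·x)/(d + c·x))³` has at least three distinct positive solutions;
hence a phase transition occurs. -/
theorem phase_transition_example :
    ∃ x y z : ℝ, 0 < x ∧ 0 < y ∧ 0 < z ∧ x ≠ y ∧ x ≠ z ∧ y ≠ z ∧
      (x = ((1 + Real.exp (2 * (-1.7) / 13) * Real.exp (2 * 6.5 / 13) * x)
            / (Real.exp (2 * 6.5 / 13) + Real.exp (2 * (-1.7) / 13) * x)) ^ 3) ∧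
      (y = ((1 + Real.exp (2 * (-1.7) / 13) * Real.exp (2 * 6.5 / 13) * y)
            / (Real.exp (2 * 6.5 / 13) + Real.exp (2 * (-1.7) / 13) * y)) ^ 3) ∧
      (z = ((1 + Real.exp (2 * (-1.7) / 13) * Real.exp (2 * 6.5 / 13) * z)
            / (Real.exp (2 * 6.5 / 13) + Real.exp (2 * (-1.7) / 13) * z)) ^ 3) := by
  have hd : Real.exp (2 * 6.5 / 13) = Real.exp 1 := by norm_num
  have hd1 : 2.718 < Real.exp 1 := by linarith [Real.exp_one_gt_d9]
  have hd2 : Real.exp 1 < 2.72 := by linarith [Real.exp_one_lt_d9]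
  have hc1 : (9.6 / 13 : ℝ) ≤ Real.exp (2 * (-1.7) / 13) := by
    have := Real.add_one_le_exp (2 * (-1.7) / 13 : ℝ)
    norm_num at this ⊢
    linarith
  have hc2 : Real.exp (2 * (-1.7) / 13) < 1 := by
    rw [Real.exp_lt_one_iff]; norm_num
  rw [hd]
  generalize Real.exp 1 = d at *
  generalize Real.exp (2 * (-1.7) / 13) = c at *
  have hc0 : 0 < c := by norm_num at hc1; linarith
  have hd0 : 0 < d := by norm_num at hd1; linarith
  have hden : ∀ x : ℝ, 0 ≤ x → 0 < d + c * x := fun x hx => by positivity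
  have hcont : ContinuousOn (fun x : ℝ => ((1 + c * d * x) / (d + c * x)) ^ 3 - x) (Set.Ici 0) := by
    apply ContinuousOn.sub _ continuousOn_id
    apply ContinuousOn.pow
    apply ContinuousOn.div (by fun_prop) (by fun_prop)
    intro x hx
    exact (hden x hx).ne'
  have h0 : 0 < ((1 + c * d * 0) / (d + c * 0)) ^ 3 - 0 := by
    have : 0 < (1 + c * d * 0) / (d + c * 0) := by simp [hd0]
    have := pow_pos this 3
    linarith
  have h1 : ((1 + c * d * 1) / (d + c * 1)) ^ 3 - 1 < 0 := by
    have a : (1 + c * d * 1) / (d + c * 1) < 1 := by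
      rw [div_lt_one (hden 1 (by norm_num))]
      nlinarith
    have b : 0 ≤ (1 + c * d * 1) / (d + c * 1) := by positivity
    have := pow_lt_one₀ b a (n := 3) (by norm_num)
    linarith
  have h5 : 0 < ((1 + c * d * 5) / (d + c * 5)) ^ 3 - 5 := by
    have a : 1.715 < (1 + c * d * 5) / (d + c * 5) := by
      rw [lt_div_iff₀ (hden 5 (by norm_num))]
      norm_num at *
      nlinarith [mul_nonneg (sub_nonneg.2 hc1) (sub_nonneg.2 hd1.le)]
    have := pow_lt_pow_left₀ a (by norm_num) (n := 3) (by norm_num)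
    norm_num at *
    linarith
  have h27 : ((1 + c * d * 27) / (d + c * 27)) ^ 3 - 27 < 0 := by
    have a : (1 + c * d * 27) / (d + c * 27) < 3 := by
      rw [div_lt_iff₀ (hden 27 (by norm_num))]
      norm_num at *
      nlinarith
    have b : 0 ≤ (1 + c * d * 27) / (d + c * 27) := by positivity
    have := pow_lt_pow_left₀ a b (n := 3) (by norm_num)
    linarith
  obtain ⟨x, hx, hx'⟩ := intermediate_value_Ioo' (show (0:ℝ) ≤ 1 by norm_num)
    (hcont.mono (fun t ht => ht.1)) ⟨h1, h0⟩
  obtain ⟨y, hy, hy'⟩ := intermediate_value_Ioo (show (1:ℝ) ≤ 5 by norm_num)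
    (hcont.mono (fun t ht => le_trans zero_le_one ht.1)) ⟨h1, h5⟩
  obtain ⟨z, hz, hz'⟩ := intermediate_value_Ioo' (show (5:ℝ) ≤ 27 by norm_num)
    (hcont.mono (fun t ht => le_trans (by norm_num) ht.1)) ⟨h27, h5⟩
  have e1 := hx.1
  have e2 := hx.2
  have e3 := hy.1
  have e4 := hy.2
  have e5 := hz.1
  exact ⟨x, y, z, by linarith, by linarith, by linarith, ne_of_lt (by linarith),
    ne_of_lt (by linarith), ne_of_lt (by linarith), (sub_eq_zero.1 hx').symm,
    (sub_eq_zero.1 hy').symm, (sub_eq_zero.1 hz').symm⟩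
end
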